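/- For every Lusztig datum a ∈ ℬ and every 1 ≤ i ≤ n, one has −M_{[i+1,n+1]}(a) − M_{{i}∪[i+2,n+1]}(a) + M_{[i+2,n+1]}(a) + M_{[i,n+1]}(a) = ε_i^*(a); that is, the quantity ε_i^* computed from the collection M(a) as for an e-BZ datum agrees with ε_i^*(a). -/

import Mathlib

/-- The set of Lusztig data: `a : Π → ℤ_{≥0}`, modeled as an integer-valued function on
`ℤ × ℤ` that is nonnegative everywhere and vanishes off `Π = {(k,l) : 1 ≤ k < l ≤ n+1}`. -/
def IsLusztig (n : ℕ) (a : ℤ → ℤ → ℤ) : Prop :=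
  (∀ k l : ℤ, 0 ≤ a k l) ∧ ∀ k l : ℤ, ¬(1 ≤ k ∧ k < l ∧ l ≤ (n : ℤ) + 1) → a k l = 0

/-- The `p`-th smallest element (1-indexed) `k_p` of a Maya diagram `K`. -/
def kth (K : Finset ℕ) (p : ℕ) : ℕ := (K.sort (· ≤ ·)).getD (p - 1) 0

/-- `C = (c_{p,q})_{1 ≤ p ≤ q ≤ l}` (with `l = |K|`) is a `K`-tableau: an upper-triangular
integer matrix with `c_{p,p} = k_p`, `c_{p,q} ≤ c_{p,q+1}` and `c_{p,q} < c_{p+1,q}`. -/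
def IsKTab (K : Finset ℕ) (c : ℕ → ℕ → ℤ) : Prop :=
  (∀ p : ℕ, 1 ≤ p → p ≤ K.card → c p p = (kth K p : ℤ)) ∧
  (∀ p q : ℕ, 1 ≤ p → p ≤ q → q + 1 ≤ K.card → c p q ≤ c p (q + 1)) ∧
  (∀ p q : ℕ, 1 ≤ p → p + 1 ≤ q → q ≤ K.card → c p q < c (p + 1) q)

/-- `Σ_{1 ≤ p < q ≤ l} a_{c_{p,q}, c_{p,q}+(q−p)}`. -/
def tabSum (a : ℤ → ℤ → ℤ) (K : Finset ℕ) (c : ℕ → ℕ → ℤ) : ℤ :=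
  ∑ p ∈ Finset.Icc 1 K.card, ∑ q ∈ Finset.Icc (p + 1) K.card,
    a (c p q) (c p q + ((q : ℤ) - (p : ℤ)))

/-- `M_K(a) = −Σ_{j=1}^{l} Σ_{i=1}^{k_j−1} a_{i,k_j} + min{ tabSum over K-tableaux }`,
for `K ∈ M_n^×`, with the conventions `M_∅(a) = M_{[1,n+1]}(a) = 0`. -/
noncomputable def MK (n : ℕ) (a : ℤ → ℤ → ℤ) (K : Finset ℕ) : ℤ :=
  if K = ∅ ∨ K = Finset.Icc 1 (n + 1) then 0
  else
    -(∑ k ∈ K, ∑ s ∈ Finset.Icc 1 (k - 1), a (s : ℤ) (k : ℤ)) +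
      sInf {z : ℤ | ∃ c : ℕ → ℕ → ℤ, IsKTab K c ∧ z = tabSum a K c}
/-- `A_l^{*(i)}(a) = Σ_{t=l+1}^{n+1} (a_{i,t} − a_{i+1,t+1})`. -/
def Astar (n : ℕ) (a : ℤ → ℤ → ℤ) (i l : ℕ) : ℤ :=
  ∑ t ∈ Finset.Icc (l + 1) (n + 1), (a (i : ℤ) (t : ℤ) - a ((i : ℤ) + 1) ((t : ℤ) + 1))

/-- `ε_i^*(a) = max{A_i^{*(i)}(a),…,A_n^{*(i)}(a)}`. -/
def epsStar (n : ℕ) (a : ℤ → ℤ → ℤ) (i : ℕ) : ℤ :=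
  ((Finset.Icc i n).image (Astar n a i)).max.unbotD 0

/-- `l_f(a,i)`: the minimal `l ∈ [i,n]` with `A_l^{*(i)}(a) = ε_i^*(a)`. -/
def lfStar (n : ℕ) (a : ℤ → ℤ → ℤ) (i : ℕ) : ℕ :=
  (((Finset.Icc i n).filter fun l => Astar n a i l = epsStar n a i).min).untopD 0

/-- `l_e(a,i)`: the maximal `l ∈ [i,n]` with `A_l^{*(i)}(a) = ε_i^*(a)`. -/
def leStar (n : ℕ) (a : ℤ → ℤ → ℤ) (i : ℕ) : ℕ :=
  (((Finset.Icc i n).filter fun l => Astar n a i l = epsStar n a i).max).unbotD 0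

/-- The operator `f̃_i^*`: increase `a_{i,l_f+1}` by 1 and decrease `a_{i+1,l_f+1}` by 1
(the latter discarded when `l_f = i`, the entry `(i+1,i+1)` being out of range). -/
def ftilStar (n : ℕ) (a : ℤ → ℤ → ℤ) (i : ℕ) : ℤ → ℤ → ℤ := fun k l =>
  if k = (i : ℤ) ∧ l = (lfStar n a i : ℤ) + 1 then a k l + 1
  else if k = (i : ℤ) + 1 ∧ l = (lfStar n a i : ℤ) + 1 ∧ (i : ℤ) < (lfStar n a i : ℤ) then
    a k l - 1
  else a k l

/-- The operator `ẽ_i^*` (for `ε_i^*(a) > 0`): decrease `a_{i,l_e+1}` by 1 and increase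
`a_{i+1,l_e+1}` by 1 (the latter discarded when `l_e = i`). -/
def etilStar (n : ℕ) (a : ℤ → ℤ → ℤ) (i : ℕ) : ℤ → ℤ → ℤ := fun k l =>
  if k = (i : ℤ) ∧ l = (leStar n a i : ℤ) + 1 then a k l - 1
  else if k = (i : ℤ) + 1 ∧ l = (leStar n a i : ℤ) + 1 ∧ (i : ℤ) < (leStar n a i : ℤ) then
    a k l + 1
  else a k l

/-!
In a `K`-tableau the entry `c_{p,q}` satisfies `k_p ≤ c_{p,q} ≤ k_q - (q - p)`.

For an interval `K` the two bounds coincide, so there is exactly one `K`-tableau, and `M_K(a)` is a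
sum of rows of `a` minus a sum of columns of `a`.

For `K = {i} ∪ [i+2, n+1]` they coincide in every row but the first, where they leave only the
values `i` and `i + 1`. Rows being weakly increasing, a tableau is then determined by the last
`l ∈ [i, n]` whose column `l + 1 - i` still has first entry `i`, and its sum exceeds
`-A_l^{*(i)}(a)` by an amount independent of `l`. Minimizing over tableaux is thus maximizing
`A_l^{*(i)}(a)` over `l`, and the remaining row and column sums cancel in the alternating sum.
-/

open Finset

section Sums

theorem sum_Icc_add_left {M : Type*} [AddCommMonoid M] (f : ℕ → M) (d u v : ℕ) :
    ∑ t ∈ Icc (d + u) (d + v), f t = ∑ s ∈ Icc u v, f (d + s) := by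
  rw [← map_add_left_Icc, sum_map]
  rfl

theorem sum_Icc_ite_le {M : Type*} [AddCommGroup M] (g h : ℕ → M) {u l : ℕ} (hul : u ≤ l)
    (v : ℕ) :
    ∑ t ∈ Icc (u + 1) v, (if t ≤ l then g t else h t) =
      ∑ t ∈ Icc (u + 1) v, g t - ∑ t ∈ Icc (l + 1) v, (g t - h t) := by
  have tail_eq_filter : Icc (l + 1) v = {t ∈ Icc (u + 1) v | ¬t ≤ l} := by
    ext t
    simp only [mem_Icc, mem_filter]
    omega
  rw [tail_eq_filter, sum_filter, ← sum_sub_distrib]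
  refine sum_congr rfl fun t _ => ?_
  by_cases ht : t ≤ l <;> simp [ht]

/-- The sum `∑_{t=k+1}^{N} a_{k,t}` of the entries of `a` in row `k`, right of the diagonal and up
to column `N`. -/
def rowSum (a : ℤ → ℤ → ℤ) (N k : ℕ) : ℤ := ∑ t ∈ Icc (k + 1) N, a k t

/-- The sum `∑_{s=1}^{k-1} a_{s,k}` of the entries of `a` in column `k`, above the diagonal: the
contribution of `k ∈ K` to the linear part of `M_K(a)`. -/
def columnSum (a : ℤ → ℤ → ℤ) (k : ℕ) : ℤ := ∑ s ∈ Icc 1 (k - 1), a s k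

theorem sum_columnSum_eq_sum_rowSum (a : ℤ → ℤ → ℤ) (N : ℕ) :
    ∑ k ∈ Icc 1 N, columnSum a k = ∑ k ∈ Icc 1 N, rowSum a N k := by
  apply sum_comm'
  intro x y
  simp only [mem_Icc]
  omega

theorem sum_rowSum_Icc_add_left (a : ℤ → ℤ → ℤ) (d u L : ℕ) :
    ∑ k ∈ Icc (d + u) (d + L), rowSum a (d + L) k =
      ∑ p ∈ Icc u L, ∑ q ∈ Icc (p + 1) L, a (d + p) (d + q) := by
  simp only [rowSum, sum_Icc_add_left, add_assoc, Nat.cast_add]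

end Sums

section Kth

theorem kth_eq_of_strictMonoOn {K : Finset ℕ} {f : ℕ → ℕ} (hf : StrictMonoOn f (Set.Icc 1 K.card))
    (hfK : ∀ p ∈ Set.Icc 1 K.card, f p ∈ K) {p : ℕ} (hp : p ∈ Set.Icc 1 K.card) :
    kth K p = f p := by
  have succ_mem (j : Fin K.card) : (j : ℕ) + 1 ∈ Set.Icc 1 K.card := ⟨by omega, j.isLt⟩
  have enumeration : (fun j : Fin K.card => f (j + 1)) = K.orderEmbOfFin rfl :=
    orderEmbOfFin_unique rfl (fun j => hfK _ (succ_mem j))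
      fun j k hjk => hf (succ_mem j) (succ_mem k) (Nat.succ_lt_succ hjk)
  obtain ⟨j, rfl⟩ : ∃ j, p = j + 1 := ⟨p - 1, (Nat.sub_add_cancel hp.1).symm⟩
  have hj : j < K.card := hp.2
  have value := congrFun enumeration ⟨j, hj⟩
  rw [orderEmbOfFin_apply] at value
  rw [kth, Nat.add_sub_cancel, List.getD_eq_getElem _ _ (by simpa using hj)]
  exact value.symm

theorem card_Icc_add_one_add (d L : ℕ) : (Icc (d + 1) (d + L)).card = L := by
  rw [Nat.card_Icc]
  omega

theorem kth_Icc (d L : ℕ) {p : ℕ} (hp : 1 ≤ p) (hpL : p ≤ L) :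
    kth (Icc (d + 1) (d + L)) p = d + p := by
  refine kth_eq_of_strictMonoOn (f := (d + ·)) (fun _ _ _ _ hpq => Nat.add_lt_add_left hpq d)
    (fun q hq => ?_) ⟨hp, (card_Icc_add_one_add d L).symm ▸ hpL⟩
  rw [card_Icc_add_one_add] at hq
  exact mem_Icc.2 ⟨Nat.add_le_add_left hq.1 d, Nat.add_le_add_left hq.2 d⟩

/-- The Maya diagram `{i} ∪ [i+2, N]`, the interval `[i, N]` with `i + 1` removed. -/
abbrev puncturedIcc (i N : ℕ) : Finset ℕ := insert i (Icc (i + 2) N)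

theorem card_puncturedIcc (i L : ℕ) : (puncturedIcc i (i + L + 1)).card = L + 1 := by
  rw [card_insert_of_notMem (by simp), Nat.card_Icc]
  omega

theorem kth_puncturedIcc (i L : ℕ) {p : ℕ} (hp : 1 ≤ p) (hpL : p ≤ L + 1) :
    kth (puncturedIcc i (i + L + 1)) p = if p = 1 then i else i + p := by
  refine kth_eq_of_strictMonoOn (f := fun p => if p = 1 then i else i + p)
    (fun q hq r _ hqr => ?_) (fun q hq => ?_) ⟨hp, (card_puncturedIcc i L).symm ▸ hpL⟩
  · have := hq.1
    dsimp only
    split_ifs <;> omega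
  · rw [card_puncturedIcc] at hq
    have := hq.1
    have := hq.2
    simp only [mem_insert, mem_Icc]
    split_ifs <;> omega

end Kth

section Tableaux

variable {K : Finset ℕ} {c : ℕ → ℕ → ℤ}

namespace IsKTab

theorem row_mono (hc : IsKTab K c) {p q r : ℕ} (hp : 1 ≤ p) (hpq : p ≤ q) (hqr : q ≤ r)
    (hr : r ≤ K.card) : c p q ≤ c p r := by
  induction r, hqr using Nat.le_induction with
  | base => rfl
  | succ r hqr ih => exact (ih (by omega)).trans (hc.2.1 p r hp (hpq.trans hqr) hr)

theorem col_add_sub_le (hc : IsKTab K c) {p r q : ℕ} (hp : 1 ≤ p) (hpr : p ≤ r) (hrq : r ≤ q)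
    (hq : q ≤ K.card) : c p q + ((r : ℤ) - p) ≤ c r q := by
  induction r, hpr using Nat.le_induction with
  | base => simp
  | succ r hpr ih =>
    have step := hc.2.2 r q (hp.trans hpr) hrq hq
    have := ih (by omega)
    push_cast
    omega

theorem kth_le (hc : IsKTab K c) {p q : ℕ} (hp : 1 ≤ p) (hpq : p ≤ q) (hq : q ≤ K.card) :
    (kth K p : ℤ) ≤ c p q :=
  hc.1 p hp (hpq.trans hq) ▸ hc.row_mono hp le_rfl hpq hq

theorem add_sub_le_kth (hc : IsKTab K c) {p q : ℕ} (hp : 1 ≤ p) (hpq : p ≤ q)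
    (hq : q ≤ K.card) : c p q + ((q : ℤ) - p) ≤ kth K q :=
  hc.1 q (hp.trans hpq) hq ▸ hc.col_add_sub_le hp hpq le_rfl hq

end IsKTab

theorem tabSum_congr (a : ℤ → ℤ → ℤ) {c' : ℕ → ℕ → ℤ}
    (h : ∀ p q, 1 ≤ p → p < q → q ≤ K.card → c p q = c' p q) :
    tabSum a K c = tabSum a K c' := by
  refine sum_congr rfl fun p hp => sum_congr rfl fun q hq => ?_
  rw [mem_Icc] at hp hq
  rw [h p q hp.1 hq.1 hq.2]

/-- The values of the sum over the entries of a tableau, as the tableau ranges over all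
`K`-tableaux; `M_K(a)` is defined through their minimum. -/
def tableauSums (a : ℤ → ℤ → ℤ) (K : Finset ℕ) : Set ℤ :=
  {z | ∃ c : ℕ → ℕ → ℤ, IsKTab K c ∧ z = tabSum a K c}

theorem MK_eq_of_isLeast {n : ℕ} {a : ℤ → ℤ → ℤ} (hK : K ≠ ∅) (hK' : K ≠ Icc 1 (n + 1)) {z : ℤ}
    (hz : IsLeast (tableauSums a K) z) : MK n a K = -∑ k ∈ K, columnSum a k + z := by
  rw [MK, if_neg (not_or.2 ⟨hK, hK'⟩), ← hz.csInf_eq]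
  rfl

end Tableaux

section Interval

variable (a : ℤ → ℤ → ℤ) (d L : ℕ)

theorem isKTab_Icc : IsKTab (Icc (d + 1) (d + L)) fun p _ => d + p := by
  refine ⟨fun p hp hpL => ?_, fun _ _ _ _ _ => le_rfl, fun p _ _ _ _ => ?_⟩
  · rw [card_Icc_add_one_add] at hpL
    simp [kth_Icc d L hp hpL]
  · push_cast
    omega

variable {d L} in
theorem IsKTab.eq_of_Icc {c : ℕ → ℕ → ℤ} (hc : IsKTab (Icc (d + 1) (d + L)) c) {p q : ℕ}
    (hp : 1 ≤ p) (hpq : p ≤ q) (hq : q ≤ L) : c p q = d + p := by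
  have hq' := (card_Icc_add_one_add d L).symm ▸ hq
  have lower := hc.kth_le hp hpq hq'
  have upper := hc.add_sub_le_kth hp hpq hq'
  rw [kth_Icc d L hp (hpq.trans hq)] at lower
  rw [kth_Icc d L (hp.trans hpq) hq] at upper
  push_cast at lower upper
  omega

theorem tabSum_Icc :
    tabSum a (Icc (d + 1) (d + L)) (fun p _ => d + p) =
      ∑ k ∈ Icc (d + 1) (d + L), rowSum a (d + L) k := by
  rw [sum_rowSum_Icc_add_left, tabSum, card_Icc_add_one_add]
  refine sum_congr rfl fun p _ => sum_congr rfl fun q _ => ?_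
  congr 1
  ring

theorem tableauSums_Icc :
    tableauSums a (Icc (d + 1) (d + L)) = {∑ k ∈ Icc (d + 1) (d + L), rowSum a (d + L) k} := by
  refine Set.eq_singleton_iff_unique_mem.2 ⟨⟨_, isKTab_Icc d L, (tabSum_Icc a d L).symm⟩, ?_⟩
  rintro _ ⟨c, hc, rfl⟩
  rw [← tabSum_Icc]
  refine tabSum_congr a fun p q hp hpq hq => hc.eq_of_Icc hp hpq.le ?_
  rwa [card_Icc_add_one_add] at hq

theorem MK_Icc (n : ℕ) {m : ℕ} (hm : 1 ≤ m) :
    MK n a (Icc m (n + 1)) =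
      -∑ k ∈ Icc m (n + 1), columnSum a k + ∑ k ∈ Icc m (n + 1), rowSum a (n + 1) k := by
  by_cases hempty : Icc m (n + 1) = ∅
  · simp [MK, hempty]
  by_cases hfull : Icc m (n + 1) = Icc 1 (n + 1)
  · rw [hfull, sum_columnSum_eq_sum_rowSum, neg_add_cancel, MK, if_pos (Or.inr rfl)]
  have hmn : m ≤ n + 1 := nonempty_Icc.1 (nonempty_iff_ne_empty.2 hempty)
  refine MK_eq_of_isLeast hempty hfull ?_
  obtain ⟨d, rfl⟩ : ∃ d, m = d + 1 := ⟨m - 1, by omega⟩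
  obtain ⟨L, hL⟩ : ∃ L, n + 1 = d + L := ⟨n + 1 - d, by omega⟩
  rw [hL, tableauSums_Icc]
  exact isLeast_singleton

end Interval

section PuncturedInterval

theorem exists_eq_ite_of_monotoneOn {f : ℕ → ℤ} {b : ℤ} {m : ℕ}
    (hf : MonotoneOn f (Set.Icc 1 (m + 1))) (hf_one : f 1 = b)
    (hf_le : ∀ q ∈ Set.Icc 1 (m + 1), f q ≤ b + 1) :
    ∃ j ≤ m, ∀ q ∈ Set.Icc 1 (m + 1), f q = if q ≤ j + 1 then b else b + 1 := by
  obtain ⟨j, hj⟩ : ∃ j, Nat.findGreatest (fun q => f q = b) (m + 1) = j + 1 :=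
    Nat.exists_eq_add_one.2 (Nat.le_findGreatest (by omega) hf_one)
  have hjm : j ≤ m := Nat.le_of_succ_le_succ (hj.ge.trans (Nat.findGreatest_le (m + 1)))
  have hf_last : f (j + 1) = b :=
    hj ▸ Nat.findGreatest_spec (P := fun q => f q = b) (Nat.le_add_left 1 m) hf_one
  refine ⟨j, hjm, fun q hq => ?_⟩
  have hf_ge : b ≤ f q := hf_one ▸ hf ⟨le_rfl, by omega⟩ hq hq.1
  split_ifs with hqj
  · exact le_antisymm (hf_last ▸ hf hq ⟨by omega, by omega⟩ hqj) hf_ge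
  · have hf_ne : f q ≠ b := Nat.findGreatest_is_greatest (hj ▸ not_le.1 hqj) hq.2
    have := hf_le q hq
    omega

/-- The tableau of shape `{i} ∪ [i+2, N]` whose first row is `i` up to column `j + 1` and `i + 1`
from there on; the other rows are constant, as they must be. -/
def stepTableau (i j : ℕ) : ℕ → ℕ → ℤ := fun p q =>
  if p = 1 then (if q ≤ j + 1 then i else i + 1) else i + p

variable {i L : ℕ}

theorem isKTab_stepTableau (i L j : ℕ) :
    IsKTab (puncturedIcc i (i + L + 1)) (stepTableau i j) := by
  refine ⟨fun p hp hpL => ?_, fun p q _ _ _ => ?_, fun p q _ _ _ => ?_⟩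
  · rw [card_puncturedIcc] at hpL
    rw [kth_puncturedIcc i L hp hpL, stepTableau]
    split_ifs <;> omega
  all_goals
    unfold stepTableau
    split_ifs <;> omega

theorem IsKTab.eq_of_puncturedIcc {c : ℕ → ℕ → ℤ} (hc : IsKTab (puncturedIcc i (i + L + 1)) c)
    {p q : ℕ} (hp : 2 ≤ p) (hpq : p ≤ q) (hq : q ≤ L + 1) : c p q = i + p := by
  have hq' := (card_puncturedIcc i L).symm ▸ hq
  have lower := hc.kth_le (by omega) hpq hq'
  have upper := hc.add_sub_le_kth (by omega) hpq hq'
  rw [kth_puncturedIcc i L (by omega) (hpq.trans hq), if_neg (by omega)] at lower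
  rw [kth_puncturedIcc i L (by omega) hq, if_neg (by omega)] at upper
  push_cast at lower upper
  omega

theorem IsKTab.exists_first_row_eq_ite {c : ℕ → ℕ → ℤ}
    (hc : IsKTab (puncturedIcc i (i + L + 1)) c) :
    ∃ j ≤ L, ∀ q ∈ Set.Icc 1 (L + 1), c 1 q = if q ≤ j + 1 then (i : ℤ) else i + 1 := by
  have hcard := card_puncturedIcc i L
  refine exists_eq_ite_of_monotoneOn
    (fun q hq r hr hqr => hc.row_mono le_rfl hq.1 hqr (hcard ▸ hr.2)) ?_ fun q hq => ?_
  · rw [hc.1 1 le_rfl (by omega), kth_puncturedIcc i L le_rfl (by omega), if_pos rfl]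
  · have upper := hc.add_sub_le_kth le_rfl hq.1 (hcard ▸ hq.2)
    rw [kth_puncturedIcc i L hq.1 hq.2] at upper
    split_ifs at upper <;> push_cast at upper <;> omega

theorem IsKTab.exists_eq_stepTableau {c : ℕ → ℕ → ℤ}
    (hc : IsKTab (puncturedIcc i (i + L + 1)) c) :
    ∃ j ≤ L, ∀ p q, 1 ≤ p → p ≤ q → q ≤ L + 1 → c p q = stepTableau i j p q := by
  obtain ⟨j, hjL, first_row⟩ := hc.exists_first_row_eq_ite
  refine ⟨j, hjL, fun p q hp hpq hq => ?_⟩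
  rcases hp.eq_or_lt with rfl | hp2
  · rw [first_row q ⟨hpq, hq⟩, stepTableau, if_pos rfl]
  · rw [hc.eq_of_puncturedIcc hp2 hpq hq, stepTableau, if_neg hp2.ne']

theorem sum_first_row_stepTableau {a : ℤ → ℤ → ℤ}
    (ha : a ((i : ℤ) + 1) (((i + L : ℕ) : ℤ) + 2) = 0) {j : ℕ} (hj : j ≤ L) :
    ∑ q ∈ Icc 2 (L + 1), a (stepTableau i j 1 q) (stepTableau i j 1 q + ((q : ℤ) - 1)) =
      rowSum a (i + L + 1) i - Astar (i + L) a i (i + j) := by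
  have last_eq_zero : a ((i : ℤ) + 1) (((i + L + 1 : ℕ) : ℤ) + 1) = 0 := by
    rw [← ha]
    push_cast
    congr 1
  calc ∑ q ∈ Icc 2 (L + 1), a (stepTableau i j 1 q) (stepTableau i j 1 q + ((q : ℤ) - 1))
      = ∑ t ∈ Icc (i + 1) (i + L), if t ≤ i + j then a i t else a (i + 1) (t + 1) := by
        rw [sum_Icc_add_left, add_comm L 1, show 2 = 1 + 1 from rfl, sum_Icc_add_left]
        refine sum_congr rfl fun s _ => ?_
        rw [stepTableau, if_pos rfl, add_comm 1 s]
        simp only [Nat.add_le_add_iff_right, Nat.add_le_add_iff_left]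
        split_ifs <;> congr 1 <;> push_cast <;> ring
    _ = ∑ t ∈ Icc (i + 1) (i + L + 1), if t ≤ i + j then a i t else a (i + 1) (t + 1) := by
        rw [sum_Icc_succ_top (by omega), if_neg (by omega), last_eq_zero, add_zero]
    _ = rowSum a (i + L + 1) i - Astar (i + L) a i (i + j) :=
        sum_Icc_ite_le (fun t => a i t) (fun t => a (i + 1) (t + 1)) (Nat.le_add_right i j) _

theorem tabSum_stepTableau {a : ℤ → ℤ → ℤ}
    (ha : a ((i : ℤ) + 1) (((i + L : ℕ) : ℤ) + 2) = 0) {j : ℕ} (hj : j ≤ L) :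
    tabSum a (puncturedIcc i (i + L + 1)) (stepTableau i j) =
      rowSum a (i + L + 1) i + ∑ k ∈ Icc (i + 2) (i + L + 1), rowSum a (i + L + 1) k -
        Astar (i + L) a i (i + j) := by
  rw [tabSum, card_puncturedIcc, ← insert_Icc_add_one_left_eq_Icc (Nat.le_add_left 1 L),
    sum_insert (by simp), Nat.cast_one, sum_first_row_stepTableau ha hj, add_assoc i L 1,
    sum_rowSum_Icc_add_left, sub_add_eq_add_sub]
  congr 2
  refine sum_congr rfl fun p hp => sum_congr rfl fun q _ => ?_
  have hp1 : p ≠ 1 := by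
    rw [mem_Icc] at hp
    omega
  rw [stepTableau, if_neg hp1]
  congr 1
  ring

theorem tableauSums_puncturedIcc {a : ℤ → ℤ → ℤ}
    (ha : a ((i : ℤ) + 1) (((i + L : ℕ) : ℤ) + 2) = 0) :
    tableauSums a (puncturedIcc i (i + L + 1)) =
      (fun x => rowSum a (i + L + 1) i + ∑ k ∈ Icc (i + 2) (i + L + 1), rowSum a (i + L + 1) k - x)
        '' (Astar (i + L) a i '' Set.Icc i (i + L)) := by
  rw [Set.image_image]
  ext z
  constructor
  · rintro ⟨c, hc, rfl⟩
    obtain ⟨j, hj, hcj⟩ := hc.exists_eq_stepTableau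
    refine ⟨i + j, ⟨Nat.le_add_right i j, Nat.add_le_add_left hj i⟩, ?_⟩
    dsimp only
    rw [← tabSum_stepTableau ha hj]
    refine (tabSum_congr a fun p q hp hpq hq => hcj p q hp hpq.le ?_).symm
    rwa [card_puncturedIcc] at hq
  · rintro ⟨l, ⟨hil, hlL⟩, rfl⟩
    obtain ⟨j, rfl⟩ := Nat.exists_eq_add_of_le hil
    have hj : j ≤ L := Nat.le_of_add_le_add_left hlL
    exact ⟨_, isKTab_stepTableau i L j, (tabSum_stepTableau ha hj).symm⟩

theorem isGreatest_epsStar {n : ℕ} (a : ℤ → ℤ → ℤ) (hin : i ≤ n) :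
    IsGreatest (Astar n a i '' Set.Icc i n) (epsStar n a i) := by
  have hne : ((Icc i n).image (Astar n a i)).Nonempty := (nonempty_Icc.2 hin).image _
  rw [epsStar, ← coe_max' hne, WithBot.unbotD_coe, ← coe_Icc, ← coe_image]
  exact isGreatest_max' _ hne

theorem MK_puncturedIcc {n : ℕ} {a : ℤ → ℤ → ℤ} (hin : i ≤ n)
    (ha : a ((i : ℤ) + 1) ((n : ℤ) + 2) = 0) :
    MK n a (puncturedIcc i (n + 1)) =
      -∑ k ∈ puncturedIcc i (n + 1), columnSum a k +
        (rowSum a (n + 1) i + ∑ k ∈ Icc (i + 2) (n + 1), rowSum a (n + 1) k - epsStar n a i) := by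
  have ne_full : puncturedIcc i (n + 1) ≠ Icc 1 (n + 1) := fun h => by
    have : i + 1 ∈ puncturedIcc i (n + 1) := h ▸ mem_Icc.2 ⟨by omega, by omega⟩
    simp at this
  refine MK_eq_of_isLeast (insert_ne_empty _ _) ne_full ?_
  have greatest := isGreatest_epsStar a hin
  obtain ⟨L, rfl⟩ := Nat.exists_eq_add_of_le hin
  rw [tableauSums_puncturedIcc ha]
  exact AntitoneOn.map_isGreatest (fun _ _ _ _ hxy => sub_le_sub_left hxy _) greatest

end PuncturedInterval

theorem stmt13_general {n i : ℕ} {a : ℤ → ℤ → ℤ} (hi1 : 1 ≤ i) (hi2 : i ≤ n)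
    (ha : a ((i : ℤ) + 1) ((n : ℤ) + 2) = 0) :
    -MK n a (Icc (i + 1) (n + 1)) - MK n a (puncturedIcc i (n + 1)) +
        MK n a (Icc (i + 2) (n + 1)) + MK n a (Icc i (n + 1)) =
      epsStar n a i := by
  have split_first (f : ℕ → ℤ) :
      ∑ k ∈ Icc i (n + 1), f k = f i + ∑ k ∈ Icc (i + 1) (n + 1), f k := by
    rw [← insert_Icc_add_one_left_eq_Icc (by omega : i ≤ n + 1), sum_insert (by simp)]
  rw [MK_Icc a n (Nat.le_add_left 1 i), MK_puncturedIcc hi2 ha, MK_Icc a n (by omega : 1 ≤ i + 2),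
    MK_Icc a n hi1, split_first, split_first, sum_insert (by simp)]
  ring

/-- for every Lusztig datum `a` and `1 ≤ i ≤ n`,
`−M_{[i+1,n+1]}(a) − M_{{i}∪[i+2,n+1]}(a) + M_{[i+2,n+1]}(a) + M_{[i,n+1]}(a) = ε_i^*(a)`;
i.e. the quantity `ε_i^*` computed from the collection `M(a)` as for an `e`-BZ datum agrees
with `ε_i^*(a)`. -/
theorem stmt13 (n : ℕ) (hn : 1 ≤ n) (a : ℤ → ℤ → ℤ) (ha : IsLusztig n a)
    (i : ℕ) (hi1 : 1 ≤ i) (hi2 : i ≤ n) :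
    -MK n a (Finset.Icc (i + 1) (n + 1)) - MK n a (insert i (Finset.Icc (i + 2) (n + 1))) +
        MK n a (Finset.Icc (i + 2) (n + 1)) + MK n a (Finset.Icc i (n + 1)) =
      epsStar n a i := by
  exact stmt13_general hi1 hi2 (ha.2 _ _ (by omega))
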